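/- Let G and M be types, f : G → M surjective, and consider the nominal formal context (G, M, r) with r g m ↔ f g = m. If there exist m₁ m₂ : M with m₁ ≠ m₂, then the concept lattice `Concept G M r` is atomistic: every concept is the supremum of the atoms below it. -/

import Mathlib

/-!
Every concept is the supremum of the object concepts of its extent, and those equal to `⊥` may be
discarded. In the nominal context of `f`, two object concepts are comparable only if the objects lie
in the same fibre of `f`, in which case they coincide; so an object concept other than `⊥` is an
atom.
-/

open Set

section ObjectConcepts

open Concept

variable {α β : Type*} {r : α → β → Prop} {a b : α}

theorem ofObject_le_iff {c : Concept α β r} : ofObject r a ≤ c ↔ a ∈ c.extent := by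
  rw [ofObjects_le_iff, singleton_subset_iff]

theorem ofObject_le_ofObject_iff : ofObject r a ≤ ofObject r b ↔ ∀ m, r b m → r a m := by
  simp only [ofObject_le_iff, extent_ofObjects, mem_lowerPolar_iff, mem_upperPolar_singleton]

theorem isLUB_image_ofObject_extent (c : Concept α β r) : IsLUB (ofObject r '' c.extent) c :=
  ⟨forall_mem_image.2 fun _ ha ↦ ofObject_le_iff.2 ha,
    fun _ hd _ ha ↦ ofObject_le_iff.1 (hd (mem_image_of_mem _ ha))⟩

theorem exists_ofObject_ne_bot_le {c : Concept α β r} (hc : c ≠ ⊥) :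
    ∃ a, ofObject r a ≠ ⊥ ∧ ofObject r a ≤ c := by
  contrapose! hc
  refine le_bot_iff.1 ((isLUB_image_ofObject_extent c).2 (forall_mem_image.2 fun a ha ↦ ?_))
  by_contra hbot
  exact hc a (fun heq ↦ hbot heq.le) (ofObject_le_iff.2 ha)

theorem isAtom_ofObject_iff :
    IsAtom (ofObject r a) ↔ ofObject r a ≠ ⊥ ∧
      ∀ b, ofObject r b ≠ ⊥ → ofObject r b ≤ ofObject r a → ofObject r a ≤ ofObject r b := by
  rw [isAtom_iff_le_of_ge]
  refine and_congr_right fun _ ↦ ⟨fun h b ↦ h (ofObject r b), fun h c hc hca ↦ ?_⟩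
  obtain ⟨b, hb, hbc⟩ := exists_ofObject_ne_bot_le hc
  exact (h b hb (hbc.trans hca)).trans hbc

theorem isAtomistic_of_isAtom_ofObject (h : ∀ a, ofObject r a ≠ ⊥ → IsAtom (ofObject r a)) :
    IsAtomistic (Concept α β r) := by
  refine CompleteLattice.isAtomistic_iff.2 fun c ↦ ⟨ofObject r '' c.extent \ {⊥}, ?_, ?_⟩
  · rw [sSup_sdiff_singleton_bot, (isLUB_image_ofObject_extent c).sSup_eq]
  · rintro _ ⟨⟨a, -, rfl⟩, ha⟩
    exact h a ha

theorem ofObject_le_ofObject_iff_apply_eq {f : α → β} :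
    ofObject (fun x y ↦ f x = y) a ≤ ofObject (fun x y ↦ f x = y) b ↔ f a = f b := by
  rw [ofObject_le_ofObject_iff, forall_eq']

end ObjectConcepts

theorem stmt_2_general {G M : Type*} (f : G → M) :
    IsAtomistic (Concept G M (fun g m => f g = m)) :=
  isAtomistic_of_isAtom_ofObject fun _ hg ↦ isAtom_ofObject_iff.2 ⟨hg, fun _ _ hle ↦
    ofObject_le_ofObject_iff_apply_eq.2 (ofObject_le_ofObject_iff_apply_eq.1 hle).symm⟩

/-- The concept lattice of the nominal context of a surjective classification map `f : G → M`
with at least two classes is atomistic. -/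
theorem stmt_2 {G M : Type*} [Nonempty M] (f : G → M) (hf : Function.Surjective f)
    (m₁ m₂ : M) (hm : m₁ ≠ m₂) :
    IsAtomistic (Concept G M (fun g m => f g = m)) :=
  stmt_2_general f
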